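/- There exists an absolute constant C such that for every half-integer K ≥ 5/2 (K ∈ ℤ + 1/2), every real n ≥ 1, and every x ≥ n, the derivative with respect to x of the function x ↦ x^{−1/2} · J_{K−1}(4πn/x) satisfies | d/dx ( x^{−1/2} J_{K−1}(4πn/x) ) | ≤ C·n·x^{−5/2}. -/

import Mathlib

open Real MeasureTheory

/-- The J-Bessel function of complex order `ν` at real argument `u`, defined by the series
`J_ν(u) = Σ_{j=0}^∞ ((−1)^j / (j! · Γ(j+1+ν))) · (u/2)^{2j+ν}`, where
`(u/2)^ν := exp(ν · log(u/2))` with the real logarithm. -/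
noncomputable def besselJ (ν : ℂ) (u : ℝ) : ℂ :=
  ∑' j : ℕ, ((-1 : ℂ) ^ j / ((Nat.factorial j : ℂ) * Complex.Gamma ((j : ℂ) + 1 + ν))) *
    Complex.exp ((2 * (j : ℂ) + ν) * (Real.log (u / 2) : ℂ))

lemma gamma_lower (a s : ℝ) (ha : 0 < a) (hs : 1 ≤ s) :
    a ^ (s - 1) * exp (-a) ≤ Real.Gamma s := by
  have hint := Real.GammaIntegral_convergent (s := s) (by linarith)
  rw [Real.Gamma_eq_integral (by linarith)]
  have hsub : Set.Ioi a ⊆ Set.Ioi (0:ℝ) := Set.Ioi_subset_Ioi ha.le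
  calc a ^ (s - 1) * exp (-a) = ∫ x in Set.Ioi a, a ^ (s-1) * exp (-x) := by
        rw [integral_const_mul, integral_exp_neg_Ioi]
    _ ≤ ∫ x in Set.Ioi a, exp (-x) * x ^ (s-1) := by
        apply setIntegral_mono_on
        · exact (integrableOn_exp_neg_Ioi a).const_mul _
        · exact hint.mono_set hsub
        · exact measurableSet_Ioi
        · intro x hx
          rw [mul_comm]
          have : a ≤ x := le_of_lt hx
          gcongr
    _ ≤ ∫ x in Set.Ioi 0, exp (-x) * x ^ (s-1) := by
        apply setIntegral_mono_set hint
        · filter_upwards [ae_restrict_mem measurableSet_Ioi] with x hx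
          have : (0:ℝ) < x := hx
          simp only [Pi.zero_apply]
          positivity
        · exact hsub.eventuallyLE

/-- real version of the terms -/
noncomputable def tm (ν n : ℝ) (j : ℕ) (y : ℝ) : ℝ :=
  ((-1 : ℝ) ^ j / ((Nat.factorial j : ℝ) * Real.Gamma ((j : ℝ) + 1 + ν))) *
    (y ^ (-(1 : ℝ) / 2) * exp ((2 * (j : ℝ) + ν) * Real.log (4 * π * n / y / 2)))

lemma tm_deriv (ν n : ℝ) (j : ℕ) (y : ℝ) (hn : 0 < n) (hy : 0 < y) :
    HasDerivAt (tm ν n j) (-(2 * j + ν + 1 / 2) / y * tm ν n j y) y := by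
  have hpi := Real.pi_pos
  have h1 : HasDerivAt (fun y : ℝ => y ^ (-(1 : ℝ) / 2)) (-(1 : ℝ) / 2 * y ^ (-(1 : ℝ) / 2 - 1)) y :=
    Real.hasDerivAt_rpow_const (Or.inl hy.ne')
  have h2 : HasDerivAt (fun y : ℝ => 4 * π * n / y / 2) (4 * π * n * (-(y ^ 2)⁻¹) / 2) y := by
    simpa [div_eq_mul_inv] using ((hasDerivAt_inv hy.ne').const_mul (4 * π * n)).div_const 2
  have h3 := ((h2.log (by positivity)).const_mul (2 * (j : ℝ) + ν)).exp
  have h4 := (h1.mul h3).const_mul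
    ((-1 : ℝ) ^ j / ((Nat.factorial j : ℝ) * Real.Gamma ((j : ℝ) + 1 + ν)))
  refine h4.congr_deriv ?_
  unfold tm
  rw [Real.rpow_sub hy, Real.rpow_one]
  generalize ((-1 : ℝ) ^ j / ((Nat.factorial j : ℝ) * Real.Gamma ((j : ℝ) + 1 + ν))) = c
  generalize exp ((2 * (j : ℝ) + ν) * Real.log (4 * π * n / y / 2)) = e
  generalize y ^ (-(1 : ℝ) / 2) = r
  field_simp
  ring

lemma tm_bound (ν n : ℝ) (j : ℕ) (y : ℝ) (hν : 3 / 2 ≤ ν) (hn : 0 < n) (hy : n / 2 < y) :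
    (2 * j + ν + 1 / 2) * |tm ν n j y| ≤
      (4 * π) ^ j / (Nat.factorial j : ℝ) * (3 * exp (4 * π) * (y ^ (-(1 : ℝ) / 2) * (2 * π * n / y))) := by
  have hpi := Real.pi_pos
  have hy0 : 0 < y := by linarith
  have hj : (0:ℝ) ≤ j := Nat.cast_nonneg j
  have hG : 0 < Real.Gamma (j + ν) := Real.Gamma_pos_of_pos (by positivity)
  have hG1 : Real.Gamma ((j : ℝ) + 1 + ν) = (j + ν) * Real.Gamma (j + ν) := by
    rw [← Real.Gamma_add_one (by positivity)]; congr 1; ring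
  have hlow := gamma_lower (4 * π) (j + ν) (by positivity) (by linarith)
  set t : ℝ := 2 * π * n / y with ht
  have ht0 : 0 < t := by positivity
  have hta : t ≤ 4 * π := by
    rw [ht, div_le_iff₀ hy0]; nlinarith
  have hte : 4 * π * n / y / 2 = t := by rw [ht]; ring
  have hexp : exp ((2 * (j : ℝ) + ν) * Real.log t) = t ^ ((j:ℝ) + ν - 1) * (t * t ^ j) := by
    rw [mul_comm, ← Real.rpow_def_of_pos ht0, ← pow_succ', ← Real.rpow_natCast t, ← Real.rpow_add ht0]
    congr 1; push_cast; ring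
  have hpow : t ^ ((j:ℝ) + ν - 1) ≤ exp (4 * π) * Real.Gamma (j + ν) := by
    calc t ^ ((j:ℝ) + ν - 1) ≤ (4 * π) ^ ((j:ℝ) + ν - 1) := by
          apply Real.rpow_le_rpow ht0.le hta; linarith
      _ = exp (4 * π) * ((4 * π) ^ ((j:ℝ) + ν - 1) * exp (-(4 * π))) := by
          rw [Real.exp_neg]; field_simp
      _ ≤ _ := by gcongr
  have hr : 0 < y ^ (-(1 : ℝ) / 2) := by positivity
  unfold tm
  rw [hte, hexp, hG1, abs_mul, abs_div, abs_pow, abs_neg, abs_one, one_pow,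
    abs_of_pos (by positivity : 0 < (Nat.factorial j : ℝ) * ((j + ν) * Real.Gamma (j + ν))),
    abs_of_pos (by positivity)]
  have hf : (0:ℝ) < (Nat.factorial j : ℝ) := by positivity
  have hjν : 0 < (j:ℝ) + ν := by positivity
  calc (2 * j + ν + 1 / 2) * (1 / ((Nat.factorial j : ℝ) * ((j + ν) * Real.Gamma (j + ν))) *
        (y ^ (-(1 : ℝ) / 2) * (t ^ ((j:ℝ) + ν - 1) * (t * t ^ j))))
      ≤ (3 * (j + ν)) * (1 / ((Nat.factorial j : ℝ) * ((j + ν) * Real.Gamma (j + ν))) *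
        (y ^ (-(1 : ℝ) / 2) * ((exp (4 * π) * Real.Gamma (j + ν)) * (t * (4 * π) ^ j)))) := by
        gcongr
        linarith
    _ = _ := by field_simp

theorem stmt11 :
    ∃ C : ℝ, ∀ K n x : ℝ, (∃ j : ℤ, K = (j : ℝ) + 1 / 2) → 5 / 2 ≤ K →
      1 ≤ n → n ≤ x →
      ‖deriv (fun y : ℝ =>
          Complex.ofReal (y ^ (-(1 : ℝ) / 2)) * besselJ ((K : ℂ) - 1) (4 * π * n / y)) x‖ ≤
        C * n * x ^ (-(5 : ℝ) / 2) := by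
  refine ⟨exp (4 * π) * (3 * exp (4 * π) * (2 * π)), ?_⟩
  intro K n x _ hK hn hx
  have hpi := Real.pi_pos
  have hn0 : 0 < n := by linarith
  have hx0 : 0 < x := by linarith
  set ν : ℝ := K - 1 with hν
  have hν2 : 3 / 2 ≤ ν := by rw [hν]; linarith
  have hS : HasSum (fun j : ℕ => (4 * π) ^ j / (Nat.factorial j : ℝ)) (exp (4 * π)) := by
    rw [Real.exp_eq_exp_ℝ]; exact NormedSpace.expSeries_div_hasSum_exp (4 * π)
  have hfun : (fun y : ℝ => Complex.ofReal (y ^ (-(1 : ℝ) / 2)) *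
      besselJ ((K : ℂ) - 1) (4 * π * n / y)) = fun y => ((∑' j, tm ν n j y : ℝ) : ℂ) := by
    funext y
    rw [besselJ, ← tsum_mul_left, Complex.ofReal_tsum]
    congr 1
    funext j
    have h1 : (j : ℂ) + 1 + ((K : ℂ) - 1) = (((j : ℝ) + 1 + ν : ℝ) : ℂ) := by
      rw [hν]; push_cast; ring
    have h2 : (2 * (j : ℂ) + ((K : ℂ) - 1)) * (Real.log (4 * π * n / y / 2) : ℂ)
      = (((2 * (j : ℝ) + ν) * Real.log (4 * π * n / y / 2) : ℝ) : ℂ) := by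
      rw [hν]; push_cast; ring
    rw [h1, h2, Complex.Gamma_ofReal, ← Complex.ofReal_exp, tm]
    generalize exp ((2 * (j : ℝ) + ν) * Real.log (4 * π * n / y / 2)) = e
    generalize y ^ (-(1 : ℝ) / 2) = r
    push_cast
    ring
  have hd : ∀ (j : ℕ) (y : ℝ), n / 2 < y → ‖-(2 * j + ν + 1 / 2) / y * tm ν n j y‖ ≤
      (4 * π) ^ j / (Nat.factorial j : ℝ) *
        (3 * exp (4 * π) * (y ^ (-(1 : ℝ) / 2) * (2 * π * n / y)) / y) := by
    intro j y hy
    have hy0 : 0 < y := by linarith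
    have hj : (0:ℝ) ≤ j := Nat.cast_nonneg j
    have := tm_bound ν n j y hν2 hn0 hy
    rw [norm_mul, norm_div, norm_neg, Real.norm_of_nonneg (by positivity : 0 ≤ 2 * (j:ℝ) + ν + 1 / 2),
      Real.norm_of_nonneg hy0.le, Real.norm_eq_abs, div_mul_eq_mul_div, ← mul_div_assoc]
    gcongr
  have hxm : n / 2 < x := by linarith
  have hsum : HasDerivAt (fun y => ∑' j, tm ν n j y)
      (∑' j : ℕ, -(2 * j + ν + 1 / 2) / x * tm ν n j x) x := by
    apply hasDerivAt_tsum_of_isPreconnected (t := Set.Ioi (n / 2)) (y₀ := x)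
      (g' := fun (j : ℕ) y => -(2 * j + ν + 1 / 2) / y * tm ν n j y)
      (hS.summable.mul_right
        (3 * exp (4 * π) * ((n/2) ^ (-(1 : ℝ) / 2) * (2 * π * n / (n/2))) / (n/2)))
      isOpen_Ioi isPreconnected_Ioi
    · intro j y hy
      exact tm_deriv ν n j y hn0 (by have : n / 2 < y := hy; linarith)
    · intro j y hy
      have hy' : n / 2 < y := hy
      refine (hd j y hy').trans ?_
      have : y ^ (-(1 : ℝ) / 2) ≤ (n/2) ^ (-(1 : ℝ) / 2) :=
        Real.rpow_le_rpow_of_nonpos (by positivity) hy'.le (by norm_num)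
      have hy0 : 0 < y := by linarith
      gcongr
    · exact hxm
    · refine Summable.of_norm_bounded (hS.summable.mul_right
        (3 * exp (4 * π) * (x ^ (-(1 : ℝ) / 2) * (2 * π * n / x)))) (fun j => ?_)
      refine le_trans ?_ (tm_bound ν n j x hν2 hn0 hxm)
      have hj : (0:ℝ) ≤ j := Nat.cast_nonneg j
      rw [Real.norm_eq_abs]
      exact le_mul_of_one_le_left (abs_nonneg _) (by linarith)
    · exact hxm
  rw [hfun, hsum.ofReal_comp.deriv, Complex.norm_real]
  refine (tsum_of_norm_bounded (hS.mul_right _) (fun j => hd j x hxm)).trans (le_of_eq ?_)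
  have : x ^ (-(5 : ℝ) / 2) = x ^ (-(1 : ℝ) / 2) / x / x := by
    rw [show (-(5 : ℝ) / 2) = -1/2 - 1 - 1 by norm_num, Real.rpow_sub hx0, Real.rpow_sub hx0, Real.rpow_one]
  rw [this]
  ring
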